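/- For every $m\ge0$ and every $r\ge0$, the quantity $Z_r(m)=\sum_{p=-r}^{r}(-1)^p\,\Delta_{r+p}^m\sum_{1\le l\le m}\theta^l\Delta_{r-p}^{m-l}\,\rho_l$ satisfies the identity $Z_r(m)=\sum_{1\le k\le m}\rho_k\,\theta^kK_r(m-k)$. -/

import Mathlib

open scoped Classical

/-- `ρ 0 = 1`, `ρ n = a 1 ⋯ a n`. -/
noncomputable def rho (a : ℕ → ℝ) (n : ℕ) : ℝ := ∏ k ∈ Finset.Icc 1 n, a k

/-- `R_k^l = ∑_{s=k}^l η s · ρ l / ρ s`. -/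
noncomputable def Rkl (a η : ℕ → ℝ) (k l : ℕ) : ℝ :=
  ∑ s ∈ Finset.Icc k l, η s * (rho a l / rho a s)

/-- `T_k^l = (R_k^l)² ρ (k-1) / ρ l`. -/
noncomputable def Tkl (a η : ℕ → ℝ) (k l : ℕ) : ℝ :=
  (Rkl a η k l) ^ 2 * (rho a (k - 1) / rho a l)

/-- `Δ_r^n = ∑_{1 ≤ k₁ < ⋯ < k_r ≤ n} R_1^{k₁} R_{k₁+1}^{k₂} ⋯ R_{k_{r-1}+1}^{k_r}`
(`Δ_0^n = 1`, and `Δ_r^n = 0` for `r > n`). -/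
noncomputable def Delta (a η : ℕ → ℝ) (r n : ℕ) : ℝ :=
  ∑ k ∈ (Fintype.piFinset fun _ : Fin r => Finset.Icc 1 n).filter
      (fun k => ∀ i j : Fin r, i < j → k i < k j),
    ∏ i : Fin r, Rkl a η (if (i : ℕ) = 0 then 1 else k ⟨(i : ℕ) - 1, Nat.lt_of_le_of_lt (Nat.sub_le _ _) i.isLt⟩ + 1) (k i)

/-- `K_r(n) = ∑_{p=-r}^r (-1)^p Δ_{r+p}^n Δ_{r-p}^n`. -/
noncomputable def Kr (a η : ℕ → ℝ) (r n : ℕ) : ℝ :=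
  ∑ p ∈ Finset.Icc (-(r : ℤ)) (r : ℤ),
    (-1 : ℝ) ^ p * Delta a η ((r : ℤ) + p).toNat n * Delta a η ((r : ℤ) - p).toNat n

/-- Shift of the data: `θ^j` replaces `(a k, η k)` by `(a (k+j), η (k+j))`. -/
def shift (f : ℕ → ℝ) (j : ℕ) : ℕ → ℝ := fun k => f (k + j)

/-!
Fix `m` and put the sequences `r ↦ θ^j Δ_r^{m-j}` into generating series `D_j`. Splitting off the
first datum `(a_{j+1}, η_{j+1})` gives, with `E_j = ∑_{l ≥ 1} (θ^j ρ)_l D_{j+l}`,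
`D_j = D_{j+1} + η_{j+1} X (D_{j+1} + E_{j+1})` and `E_j = a_{j+1} (D_{j+1} + E_{j+1})`.
Up to the sign `(-1)^r`, the alternating sums over `p` are the coefficients of `X^{2r}` in products
of the form `F(-X) G(X)`. In `D_j(-X) E_j(X)` the term quadratic in `F = D_{j+1} + E_{j+1}` is a
multiple of `X F(-X) F(X)`, which is odd in `X`, so only
`a_{j+1} (D_{j+1}(-X) D_{j+1}(X) + D_{j+1}(-X) E_{j+1}(X))` contributes and the identity follows by
iteration.
-/

section ChainSum

variable {α R : Type*} [Preorder α] [LocallyFiniteOrder α] [CommSemiring R]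

/-- The finset of chains `x < k₁ < ⋯ < k_r ≤ y`, encoded as functions `Fin r → α`. -/
noncomputable def chains (r : ℕ) (x y : α) : Finset (Fin r → α) :=
  (Fintype.piFinset fun _ : Fin r => Finset.Ioc x y).filter StrictMono

/-- The sum of `w x k₁ * w k₁ k₂ * ⋯ * w k_{r-1} k_r` over all chains `x < k₁ < ⋯ < k_r ≤ y`;
the tuple `Fin.cons x k` prepends the starting point `x` to the chain `k`. -/
noncomputable def chainSum (w : α → α → R) (r : ℕ) (x y : α) : R :=
  ∑ k ∈ chains r x y, ∏ i : Fin r, w (Fin.cons (α := fun _ => α) x k i.castSucc) (k i)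

lemma mem_chains {r : ℕ} {x y : α} {k : Fin r → α} :
    k ∈ chains r x y ↔ (∀ i, k i ∈ Finset.Ioc x y) ∧ StrictMono k := by
  simp only [chains, Finset.mem_filter, Fintype.mem_piFinset]

lemma cons_mem_chains {r : ℕ} {x y z : α} {k : Fin r → α} :
    Fin.cons z k ∈ chains (r + 1) x y ↔ z ∈ Finset.Ioc x y ∧ k ∈ chains r z y := by
  simp only [mem_chains, Fin.forall_fin_succ, Fin.cons_zero, Fin.cons_succ, Fin.strictMono_cons,
    Finset.mem_Ioc]
  constructor
  · rintro ⟨⟨hz, hk⟩, hzk, hmono⟩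
    exact ⟨hz, fun i => ⟨hzk i, (hk i).2⟩, hmono⟩
  · rintro ⟨hz, hk, hmono⟩
    exact ⟨⟨hz, fun i => ⟨hz.1.trans (hk i).1, (hk i).2⟩⟩, fun i => (hk i).1, hmono⟩

lemma chainSum_zero (w : α → α → R) (x y : α) : chainSum w 0 x y = 1 := by
  simp [chainSum, chains, Subsingleton.strictMono]

lemma chainSum_succ (w : α → α → R) (r : ℕ) (x y : α) :
    chainSum w (r + 1) x y = ∑ z ∈ Finset.Ioc x y, w x z * chainSum w r z y := by
  simp only [chainSum, Finset.mul_sum]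
  rw [Finset.sum_sigma']
  refine Finset.sum_bij' (fun k _ => ⟨k 0, Fin.tail k⟩) (fun zk _ => Fin.cons zk.1 zk.2)
    (fun k hk => ?_) (fun zk hzk => ?_) (fun k _ => Fin.cons_self_tail k) (fun _ _ => rfl)
    (fun k _ => ?_)
  · rw [Finset.mem_sigma, ← cons_mem_chains, Fin.cons_self_tail]
    exact hk
  · exact cons_mem_chains.2 (Finset.mem_sigma.1 hzk)
  · rw [Fin.prod_univ_succ, Fin.castSucc_zero, Fin.cons_zero]
    simp only [← Fin.succ_castSucc, Fin.cons_succ, Fin.cons_self_tail, Fin.tail]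

end ChainSum

lemma chainSum_add_right {R : Type*} [CommSemiring R] (w : ℕ → ℕ → R) (r x y j : ℕ) :
    chainSum w r (x + j) (y + j) = chainSum (fun u v => w (u + j) (v + j)) r x y := by
  induction r generalizing x with
  | zero => simp only [chainSum_zero]
  | succ r ih =>
    rw [chainSum_succ, chainSum_succ, ← Finset.map_add_right_Ioc, Finset.sum_map]
    simp only [addRightEmbedding_apply, ih]

lemma sum_Icc_one_succ {M : Type*} [AddCommMonoid M] (f : ℕ → M) (n : ℕ) :
    ∑ k ∈ Finset.Icc 1 (n + 1), f k = f 1 + ∑ k ∈ Finset.Icc 1 n, f (k + 1) := by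
  rw [← Finset.add_sum_Ioc_eq_sum_Icc (Nat.le_add_left 1 n), ← Finset.Icc_add_one_left_eq_Ioc,
    ← Finset.map_add_right_Icc, Finset.sum_map]
  rfl

section AlternatingConvolution

open PowerSeries

variable {R : Type*}

lemma coeff_evalNegHom [CommRing R] (F : R⟦X⟧) (n : ℕ) :
    coeff n (evalNegHom F) = (-1) ^ n * coeff n F :=
  coeff_rescale F (-1) n

lemma evalNegHom_C [CommRing R] (c : R) : evalNegHom (C c) = C c := by
  ext n
  rcases eq_or_ne n 0 with rfl | hn
  · simp [coeff_evalNegHom]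
  · simp [coeff_evalNegHom, coeff_C, hn]

lemma coeff_evalNegHom_mul_self_of_odd [CommRing R] (F : R⟦X⟧) {n : ℕ} (hn : Odd n) :
    coeff n (evalNegHom F * F) = 0 := by
  rw [coeff_mul]
  refine Finset.sum_involution (fun ij _ => ij.swap) ?_ ?_
    (fun ij hij => Finset.HasAntidiagonal.swap_mem_antidiagonal.2 hij) (fun ij _ => ij.swap_swap)
  · rintro ⟨i, j⟩ hij
    obtain rfl : i + j = n := Finset.HasAntidiagonal.mem_antidiagonal.1 hij
    have hsign : (-1 : R) ^ i + (-1) ^ j = 0 := by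
      rcases Nat.even_or_odd i with hi | hi
      · simp [hi.neg_one_pow, (Nat.odd_add'.1 hn |>.2 hi).neg_one_pow]
      · simp [hi.neg_one_pow, (Nat.odd_add.1 hn |>.1 hi).neg_one_pow]
    simp only [Prod.fst_swap, Prod.snd_swap, coeff_evalNegHom]
    linear_combination coeff i F * coeff j F * hsign
  · rintro ⟨i, j⟩ hij - hswap
    obtain rfl : i + j = n := Finset.HasAntidiagonal.mem_antidiagonal.1 hij
    obtain rfl : j = i := congrArg Prod.fst hswap
    exact Nat.not_odd_iff_even.2 (Even.add_self j) hn

lemma coeff_two_mul_evalNegHom_add_mul_smul [CommRing R] (D E : R⟦X⟧) (b c : R) (r : ℕ) :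
    coeff (2 * r) (evalNegHom (D + X * c • (D + E)) * b • (D + E)) =
      b * (coeff (2 * r) (evalNegHom D * D) + coeff (2 * r) (evalNegHom D * E)) := by
  have hodd : coeff (2 * r) (X * (evalNegHom (D + E) * (D + E))) = 0 := by
    cases r with
    | zero => exact coeff_zero_X_mul _
    | succ r =>
      rw [mul_add_one, coeff_succ_X_mul]
      exact coeff_evalNegHom_mul_self_of_odd _ (odd_two_mul_add_one r)
  have hexpand : evalNegHom (D + X * c • (D + E)) * b • (D + E) =
      C b * (evalNegHom D * D + evalNegHom D * E -
        C c * (X * (evalNegHom (D + E) * (D + E)))) := by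
    simp only [smul_eq_C_mul, map_add, map_mul, evalNegHom_X, evalNegHom_C]
    ring
  rw [hexpand, coeff_C_mul, map_sub, map_add, coeff_C_mul, hodd, mul_zero, sub_zero]

lemma sum_Icc_neg_one_zpow_mul [Field R] (F G : R⟦X⟧) (r : ℕ) :
    ∑ p ∈ Finset.Icc (-(r : ℤ)) r,
        (-1 : R) ^ p * coeff ((r : ℤ) + p).toNat F * coeff ((r : ℤ) - p).toNat G =
      (-1) ^ r * coeff (2 * r) (evalNegHom F * G) := by
  rw [coeff_mul, Finset.mul_sum]
  refine Finset.sum_bij' (fun p _ => (((r : ℤ) + p).toNat, ((r : ℤ) - p).toNat))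
    (fun ij _ => (ij.1 : ℤ) - r) ?_ ?_ ?_ ?_ ?_
  all_goals simp only [Finset.mem_Icc, Finset.HasAntidiagonal.mem_antidiagonal, Prod.forall,
    Prod.mk.injEq]
  any_goals omega
  intro p hp
  have hsign : (-1 : R) ^ p = (-1) ^ r * (-1) ^ ((r : ℤ) + p).toNat := by
    rw [← zpow_natCast, ← zpow_natCast, Int.toNat_of_nonneg (by omega),
      ← zpow_add₀ (neg_ne_zero.2 one_ne_zero), ← add_assoc,
      zpow_add₀ (neg_ne_zero.2 one_ne_zero), (Even.add_self (r : ℤ)).neg_one_zpow, one_mul]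
  rw [hsign, coeff_evalNegHom]
  ring

end AlternatingConvolution

section Shift

lemma shift_shift (f : ℕ → ℝ) (i j : ℕ) : shift (shift f i) j = shift f (j + i) :=
  funext fun k => congrArg f (add_assoc k j i)

lemma shift_ne_zero {a : ℕ → ℝ} (ha : ∀ k, 1 ≤ k → a k ≠ 0) (j : ℕ) :
    ∀ k, 1 ≤ k → shift a j k ≠ 0 :=
  fun k hk => ha (k + j) (Nat.le_add_right_of_le hk)

lemma rho_zero (a : ℕ → ℝ) : rho a 0 = 1 := rfl

lemma rho_one (a : ℕ → ℝ) : rho a 1 = a 1 := by simp [rho]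

lemma rho_succ (a : ℕ → ℝ) (n : ℕ) : rho a (n + 1) = rho a n * a (n + 1) :=
  Finset.prod_Icc_succ_top (Nat.le_add_left 1 n) a

lemma rho_ne_zero {a : ℕ → ℝ} (ha : ∀ k, 1 ≤ k → a k ≠ 0) (n : ℕ) : rho a n ≠ 0 :=
  Finset.prod_ne_zero_iff.2 fun k hk => ha k (Finset.mem_Icc.1 hk).1

lemma rho_add (a : ℕ → ℝ) (l j : ℕ) : rho a (l + j) = rho a j * rho (shift a j) l := by
  induction l with
  | zero => rw [zero_add, rho_zero, mul_one]
  | succ l ih =>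
    rw [add_right_comm, rho_succ, rho_succ, ih, mul_assoc, shift, add_right_comm]

lemma sum_rho_smul_succ {M : Type*} [AddCommMonoid M] [Module ℝ M] (a : ℕ → ℝ) (f : ℕ → M)
    (m : ℕ) :
    ∑ k ∈ Finset.Icc 1 (m + 1), rho a k • f k =
      a 1 • (f 1 + ∑ k ∈ Finset.Icc 1 m, rho (shift a 1) k • f (k + 1)) := by
  simp_rw [sum_Icc_one_succ, rho_add, rho_one, mul_smul, smul_add, Finset.smul_sum]

lemma Rkl_add_right (a η : ℕ → ℝ) {j : ℕ} (hj : rho a j ≠ 0) (k l : ℕ) :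
    Rkl a η (k + j) (l + j) = Rkl (shift a j) (shift η j) k l := by
  rw [Rkl, ← Finset.map_add_right_Icc, Finset.sum_map, Rkl]
  refine Finset.sum_congr rfl fun s _ => ?_
  rw [addRightEmbedding_apply, rho_add, rho_add, mul_div_mul_left _ _ hj, shift]

lemma Rkl_one_succ (a η : ℕ → ℝ) (h : a 1 ≠ 0) (k : ℕ) :
    Rkl a η 1 (k + 1) = η 1 * rho (shift a 1) k + Rkl (shift a 1) (shift η 1) 1 k := by
  have hrho : rho a 1 ≠ 0 := (rho_one a).trans_ne h
  have hquot : rho a (k + 1) / rho a 1 = rho (shift a 1) k := by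
    rw [rho_add, mul_div_cancel_left₀ _ hrho]
  rw [← Rkl_add_right a η hrho, ← hquot, Rkl, Rkl,
    ← Finset.add_sum_Ioc_eq_sum_Icc (Nat.le_add_left 1 k), ← Finset.Icc_add_one_left_eq_Ioc]

end Shift

section Delta

lemma Delta_eq_chainSum (a η : ℕ → ℝ) (r n : ℕ) :
    Delta a η r n = chainSum (fun x y => Rkl a η (x + 1) y) r 0 n := by
  refine Finset.sum_congr ?_ fun k _ => Finset.prod_congr rfl fun i _ => ?_
  · ext k
    simp only [Finset.mem_filter, Fintype.mem_piFinset, mem_chains]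
    rfl
  · cases r with
    | zero => exact i.elim0
    | succ r => cases i using Fin.cases <;> rfl

lemma Delta_zero (a η : ℕ → ℝ) (n : ℕ) : Delta a η 0 n = 1 := by
  rw [Delta_eq_chainSum, chainSum_zero]

lemma Delta_shift (a η : ℕ → ℝ) {j : ℕ} (hj : rho a j ≠ 0) (r n : ℕ) :
    Delta (shift a j) (shift η j) r n = chainSum (fun x y => Rkl a η (x + 1) y) r j (n + j) := by
  have hchain := chainSum_add_right (fun x y => Rkl a η (x + 1) y) r 0 n j
  rw [zero_add] at hchain
  rw [hchain, Delta_eq_chainSum]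
  simp only [← Rkl_add_right a η hj, add_right_comm]

lemma Delta_succ {a : ℕ → ℝ} (ha : ∀ k, 1 ≤ k → a k ≠ 0) (η : ℕ → ℝ) (r n : ℕ) :
    Delta a η (r + 1) n =
      ∑ k ∈ Finset.Icc 1 n, Rkl a η 1 k * Delta (shift a k) (shift η k) r (n - k) := by
  rw [Delta_eq_chainSum, chainSum_succ, ← Finset.Icc_add_one_left_eq_Ioc]
  refine Finset.sum_congr rfl fun k hk => ?_
  rw [Delta_shift a η (rho_ne_zero ha k), Nat.sub_add_cancel (Finset.mem_Icc.1 hk).2]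

end Delta

section Series

open PowerSeries

/-- The generating series `D = ∑_r Δ_r^m X^r`; the alternating sums `K_r(m)` are, up to sign, the
even coefficients of `D(-X) D(X)`. -/
noncomputable def deltaSeries (a η : ℕ → ℝ) (m : ℕ) : ℝ⟦X⟧ :=
  PowerSeries.mk fun r => Delta a η r m

/-- The series `E = ∑_{1 ≤ l ≤ m} ρ_l · θ^l D`, where `θ^l D` is taken at level `m - l`; its
coefficients are the inner sums in `Z_r(m)`. -/
noncomputable def weightedDeltaSeries (a η : ℕ → ℝ) (m : ℕ) : ℝ⟦X⟧ :=
  ∑ l ∈ Finset.Icc 1 m, rho a l • deltaSeries (shift a l) (shift η l) (m - l)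

lemma coeff_deltaSeries (a η : ℕ → ℝ) (r m : ℕ) :
    coeff r (deltaSeries a η m) = Delta a η r m :=
  coeff_mk _ _

lemma coeff_weightedDeltaSeries (a η : ℕ → ℝ) (r m : ℕ) :
    coeff r (weightedDeltaSeries a η m) =
      ∑ l ∈ Finset.Icc 1 m, Delta (shift a l) (shift η l) r (m - l) * rho a l := by
  simp only [weightedDeltaSeries, map_sum, coeff_smul, coeff_deltaSeries, smul_eq_mul, mul_comm]

lemma Kr_eq_coeff (a η : ℕ → ℝ) (r n : ℕ) :
    Kr a η r n =
      (-1) ^ r * coeff (2 * r) (evalNegHom (deltaSeries a η n) * deltaSeries a η n) := by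
  simp only [Kr, ← sum_Icc_neg_one_zpow_mul, coeff_deltaSeries]

lemma weightedDeltaSeries_zero (a η : ℕ → ℝ) : weightedDeltaSeries a η 0 = 0 := rfl

lemma weightedDeltaSeries_succ (a η : ℕ → ℝ) (m : ℕ) :
    weightedDeltaSeries a η (m + 1) =
      a 1 • (deltaSeries (shift a 1) (shift η 1) m +
        weightedDeltaSeries (shift a 1) (shift η 1) m) := by
  simp only [weightedDeltaSeries, sum_rho_smul_succ, shift_shift, Nat.add_sub_add_right,
    Nat.add_sub_cancel]

lemma deltaSeries_eq_one_add {a : ℕ → ℝ} (ha : ∀ k, 1 ≤ k → a k ≠ 0) (η : ℕ → ℝ) (m : ℕ) :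
    deltaSeries a η m = 1 + X * ∑ k ∈ Finset.Icc 1 m,
      Rkl a η 1 k • deltaSeries (shift a k) (shift η k) (m - k) := by
  ext r
  cases r with
  | zero => simp [coeff_deltaSeries, Delta_zero]
  | succ r =>
    simp only [map_add, coeff_succ_X_mul, map_sum, coeff_smul, coeff_deltaSeries, Delta_succ ha,
      smul_eq_mul, coeff_one, Nat.succ_ne_zero, if_false, zero_add]

lemma deltaSeries_succ {a : ℕ → ℝ} (ha : ∀ k, 1 ≤ k → a k ≠ 0) (η : ℕ → ℝ) (m : ℕ) :
    deltaSeries a η (m + 1) = deltaSeries (shift a 1) (shift η 1) m +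
      X * η 1 • (deltaSeries (shift a 1) (shift η 1) m +
        weightedDeltaSeries (shift a 1) (shift η 1) m) := by
  have hR_one : Rkl a η 1 1 = η 1 := by simp [Rkl, rho_one, ha 1 le_rfl]
  have hsum : ∑ k ∈ Finset.Icc 1 (m + 1),
        Rkl a η 1 k • deltaSeries (shift a k) (shift η k) (m + 1 - k) =
      η 1 • (deltaSeries (shift a 1) (shift η 1) m +
        weightedDeltaSeries (shift a 1) (shift η 1) m) +
      ∑ k ∈ Finset.Icc 1 m, Rkl (shift a 1) (shift η 1) 1 k •
        deltaSeries (shift (shift a 1) k) (shift (shift η 1) k) (m - k) := by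
    simp only [sum_Icc_one_succ, hR_one, Rkl_one_succ a η (ha 1 le_rfl), weightedDeltaSeries,
      shift_shift, Nat.add_sub_add_right, Nat.add_sub_cancel, add_smul, smul_add,
      mul_smul, Finset.sum_add_distrib, Finset.smul_sum, add_assoc]
  rw [deltaSeries_eq_one_add ha, hsum, mul_add, add_comm (X * _), ← add_assoc,
    ← deltaSeries_eq_one_add (shift_ne_zero ha 1)]

lemma coeff_evalNegHom_deltaSeries_mul_weightedDeltaSeries {a : ℕ → ℝ}
    (ha : ∀ k, 1 ≤ k → a k ≠ 0) (η : ℕ → ℝ) (m r : ℕ) :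
    coeff (2 * r) (evalNegHom (deltaSeries a η m) * weightedDeltaSeries a η m) =
      ∑ k ∈ Finset.Icc 1 m, rho a k *
        coeff (2 * r) (evalNegHom (deltaSeries (shift a k) (shift η k) (m - k)) *
          deltaSeries (shift a k) (shift η k) (m - k)) := by
  induction m generalizing a η with
  | zero => simp [weightedDeltaSeries_zero]
  | succ m ih =>
    rw [deltaSeries_succ ha, weightedDeltaSeries_succ, coeff_two_mul_evalNegHom_add_mul_smul,
      ih (shift_ne_zero ha 1)]
    simp only [← smul_eq_mul (a := rho _ _), sum_rho_smul_succ]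
    simp only [smul_eq_mul, shift_shift, Nat.add_sub_add_right, Nat.add_sub_cancel]

end Series

theorem stmt_18_general (a η : ℕ → ℝ) (ha : ∀ k : ℕ, 1 ≤ k → a k ≠ 0) (m r : ℕ) :
    (∑ p ∈ Finset.Icc (-(r : ℤ)) (r : ℤ),
      (-1 : ℝ) ^ p * Delta a η ((r : ℤ) + p).toNat m *
        ∑ l ∈ Finset.Icc 1 m,
          Delta (shift a l) (shift η l) ((r : ℤ) - p).toNat (m - l) * rho a l) =
    ∑ k ∈ Finset.Icc 1 m, rho a k * Kr (shift a k) (shift η k) r (m - k) := by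
  simp only [← coeff_deltaSeries a η, ← coeff_weightedDeltaSeries]
  rw [sum_Icc_neg_one_zpow_mul, coeff_evalNegHom_deltaSeries_mul_weightedDeltaSeries ha,
    Finset.mul_sum]
  simp only [Kr_eq_coeff, mul_left_comm]

/-- The identity `Z_r(m) = ∑_{1≤k≤m} ρ k · θ^k K_r(m-k)`, where
`Z_r(m) = ∑_{p=-r}^r (-1)^p Δ_{r+p}^m ∑_{1≤l≤m} θ^l Δ_{r-p}^{m-l} ρ l`. -/
theorem stmt_18
    (a η : ℕ → ℝ) (ha : ∀ k : ℕ, 1 ≤ k → 0 < a k) :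
    ∀ m r : ℕ,
      (∑ p ∈ Finset.Icc (-(r : ℤ)) (r : ℤ),
        (-1 : ℝ) ^ p * Delta a η ((r : ℤ) + p).toNat m *
          ∑ l ∈ Finset.Icc 1 m,
            Delta (shift a l) (shift η l) ((r : ℤ) - p).toNat (m - l) * rho a l) =
      ∑ k ∈ Finset.Icc 1 m, rho a k * Kr (shift a k) (shift η k) r (m - k) := by
  exact stmt_18_general a η fun k hk => (ha k hk).ne'
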